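/- Let u be a monotone traveling wave solution of the unbalanced Allen-Cahn equation in the plane connecting −1 to 1, and assume u and its derivatives up to third order are bounded. Then the function h(x) := ∫_ℝ ∂u/∂x(x,y) · ∂u/∂y(x,y) dy is well defined and bounded on ℝ, is differentiable, and satisfies h'(x) = F(1) − c ∫_ℝ (∂u/∂y(x,y))² dy for every x ∈ ℝ; consequently ∫_a^b ∫_ℝ (∂u/∂y)² dy dx = (h(a) − h(b))/c + F(1)(b − a)/c for all a < b. -/

import Mathlib

open Real Filter MeasureTheory Metric

noncomputable def pdx (u : ℝ → ℝ → ℝ) (x y : ℝ) : ℝ := deriv (fun t => u t y) x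

noncomputable def pdy (u : ℝ → ℝ → ℝ) (x y : ℝ) : ℝ := deriv (fun t => u x t) y

noncomputable def pdxx (u : ℝ → ℝ → ℝ) (x y : ℝ) : ℝ := deriv (fun t => pdx u t y) x

noncomputable def pdyy (u : ℝ → ℝ → ℝ) (x y : ℝ) : ℝ := deriv (fun t => pdy u x t) y

/-- `F` is an unbalanced double-well potential. -/
def UnbalancedDoubleWell (F : ℝ → ℝ) : Prop :=
  ContDiff ℝ 3 F ∧ deriv F (-1) = 0 ∧ deriv F 1 = 0 ∧
  0 < deriv (deriv F) (-1) ∧ 0 < deriv (deriv F) 1 ∧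
  (∀ s ∈ Set.Ioo (-1 : ℝ) 0, 0 < deriv F s) ∧
  (∀ s ∈ Set.Ioo (0 : ℝ) 1, deriv F s < 0) ∧
  F (-1) = 0 ∧ 0 < F 1

/-- `u` is a `C³` solution of `Δu + c uᵧ = F'(u)` on `ℝ²` with `|u| ≤ 1`
which is monotone in `y`. -/
def IsSolution (F : ℝ → ℝ) (c : ℝ) (u : ℝ → ℝ → ℝ) : Prop :=
  ContDiff ℝ 3 (fun p : ℝ × ℝ => u p.1 p.2) ∧
  (∀ x y : ℝ, pdxx u x y + pdyy u x y + c * pdy u x y = deriv F (u x y)) ∧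
  (∀ x y : ℝ, |u x y| ≤ 1) ∧
  (∀ x y : ℝ, 0 < pdy u x y)

/-- A monotone traveling wave solution connecting `-1` to `1`. -/
def IsTravelingWave (F : ℝ → ℝ) (c : ℝ) (u : ℝ → ℝ → ℝ) : Prop :=
  IsSolution F c u ∧
  (∀ x : ℝ, Tendsto (fun y => u x y) atTop (nhds 1)) ∧
  (∀ x : ℝ, Tendsto (fun y => u x y) atBot (nhds (-1)))

/-!
The stress tensor `∇u ⊗ ∇u - (|∇u|² / 2 + F(u)) I` has divergence `(Δu - F'(u)) ∇u`, so for a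
solution the vector field `(uₓuᵧ, (uᵧ² - uₓ²) / 2 - F(u))` has divergence `-c uᵧ²`. The divergence
theorem on `[a, b] × [-R, R]` followed by `R → ∞` gives
`c ∫ₐᵇ ∫ uᵧ² = h(a) - h(b) + (F(1) - F(-1)) (b - a)`: the gradient is bounded and Lipschitz while
the increments of `u` vanish as `y → ±∞`, so the gradient vanishes there too. As `uᵧ ≥ 0` has
total mass `2` on every vertical line and `uᵧ(·, y)` is uniformly Lipschitz, `x ↦ ∫ uᵧ² dy` is
Lipschitz, and the fundamental theorem of calculus yields `h'`.
-/

open Function Topology NNReal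

section Fderiv

variable {E G : Type*} [NormedAddCommGroup E] [NormedSpace ℝ E]
  [NormedAddCommGroup G] [NormedSpace ℝ G] {f : E → G} {K : ℝ≥0}

theorem lipschitzWith_fderiv_of_norm_iteratedFDeriv_two_le (hf : ContDiff ℝ 2 f)
    (hK : ∀ p, ‖iteratedFDeriv ℝ 2 f p‖ ≤ K) : LipschitzWith K (fderiv ℝ f) := by
  refine lipschitzWith_of_nnnorm_fderiv_le (𝕜 := ℝ)
    ((hf.fderiv_right (m := 1) le_rfl).differentiable one_ne_zero) fun p => ?_
  rw [← NNReal.coe_le_coe, coe_nnnorm, ← norm_iteratedFDeriv_one, norm_iteratedFDeriv_fderiv]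
  exact hK p

theorem norm_fderiv_apply_le (hf : Differentiable ℝ f) (hK : LipschitzWith K (fderiv ℝ f))
    (p v : E) : ‖fderiv ℝ f p v‖ ≤ ‖f (p + v) - f p‖ + K * ‖v‖ ^ 2 := by
  have hclose : ∀ q ∈ Metric.closedBall p ‖v‖, ‖fderiv ℝ f q - fderiv ℝ f p‖ ≤ K * ‖v‖ := by
    intro q hq
    rw [← dist_eq_norm]
    exact hK.dist_le_mul_of_le hq
  have htaylor : ‖f (p + v) - f p - fderiv ℝ f p (p + v - p)‖ ≤ K * ‖v‖ * ‖p + v - p‖ :=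
    (convex_closedBall p ‖v‖).norm_image_sub_le_of_norm_fderiv_le' (fun q _ => hf q) hclose
      (mem_closedBall_self (norm_nonneg v)) (by simp)
  rw [add_sub_cancel_left, norm_sub_rev] at htaylor
  linarith [norm_le_norm_add_norm_sub' (fderiv ℝ f p v) (f (p + v) - f p)]

theorem tendsto_fderiv_apply_zero {ι : Type*} {l : Filter ι} {p : ι → E} {v : E}
    (hf : Differentiable ℝ f) (hK : LipschitzWith K (fderiv ℝ f))
    (hl : ∀ δ : ℝ, Tendsto (fun i => f (p i + δ • v) - f (p i)) l (𝓝 0)) :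
    Tendsto (fun i => fderiv ℝ f (p i) v) l (𝓝 0) := by
  have hquot : ∀ δ > 0, ∀ i,
      ‖fderiv ℝ f (p i) v‖ ≤ ‖f (p i + δ • v) - f (p i)‖ / δ + δ * (K * ‖v‖ ^ 2) := by
    intro δ hδ i
    have h := norm_fderiv_apply_le hf hK (p i) (δ • v)
    rw [map_smul, norm_smul, norm_smul, Real.norm_of_nonneg hδ.le] at h
    rw [← mul_le_mul_iff_of_pos_left hδ]
    calc δ * ‖fderiv ℝ f (p i) v‖ ≤ _ := h
      _ = _ := by field_simp
  rw [Metric.tendsto_nhds]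
  intro ε hε
  have hsmall : Tendsto (fun δ : ℝ => δ * (K * ‖v‖ ^ 2)) (𝓝[>] 0) (𝓝 0) := by
    simpa using (tendsto_id.mul_const (K * ‖v‖ ^ 2)).mono_left (nhdsWithin_le_nhds (a := (0 : ℝ)))
  obtain ⟨δ, hδε, hδ⟩ :=
    ((hsmall.eventually_lt_const (half_pos hε)).and self_mem_nhdsWithin).exists
  have hincr : Tendsto (fun i => ‖f (p i + δ • v) - f (p i)‖ / δ) l (𝓝 0) := by
    simpa using (hl δ).norm.div_const δ
  filter_upwards [hincr.eventually_lt_const (half_pos hε)] with i hi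
  rw [dist_zero_right]
  linarith [hquot δ hδ i]

end Fderiv

section PartialDerivatives

variable {v : ℝ → ℝ → ℝ}

theorem hasDerivAt_fst_fderiv (hv : Differentiable ℝ (uncurry v)) (x y : ℝ) :
    HasDerivAt (fun t => v t y) (fderiv ℝ (uncurry v) (x, y) (1, 0)) x :=
  (hv (x, y)).hasFDerivAt.comp_hasDerivAt (f := fun t : ℝ => (t, y)) x
    ((hasDerivAt_id x).prodMk (hasDerivAt_const x y))

theorem hasDerivAt_snd_fderiv (hv : Differentiable ℝ (uncurry v)) (x y : ℝ) :
    HasDerivAt (v x) (fderiv ℝ (uncurry v) (x, y) (0, 1)) y :=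
  (hv (x, y)).hasFDerivAt.comp_hasDerivAt (f := fun t : ℝ => (x, t)) y
    ((hasDerivAt_const y x).prodMk (hasDerivAt_id y))

theorem pdx_eq_fderiv (hv : Differentiable ℝ (uncurry v)) (x y : ℝ) :
    pdx v x y = fderiv ℝ (uncurry v) (x, y) (1, 0) :=
  (hasDerivAt_fst_fderiv hv x y).deriv

theorem pdy_eq_fderiv (hv : Differentiable ℝ (uncurry v)) (x y : ℝ) :
    pdy v x y = fderiv ℝ (uncurry v) (x, y) (0, 1) :=
  (hasDerivAt_snd_fderiv hv x y).deriv

theorem hasDerivAt_pdx (hv : Differentiable ℝ (uncurry v)) (x y : ℝ) :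
    HasDerivAt (fun t => v t y) (pdx v x y) x :=
  (hasDerivAt_fst_fderiv hv x y).differentiableAt.hasDerivAt

theorem hasDerivAt_pdy (hv : Differentiable ℝ (uncurry v)) (x y : ℝ) :
    HasDerivAt (v x) (pdy v x y) y :=
  (hasDerivAt_snd_fderiv hv x y).differentiableAt.hasDerivAt

theorem uncurry_pdx (hv : Differentiable ℝ (uncurry v)) :
    uncurry (pdx v) = fun p => fderiv ℝ (uncurry v) p (1, 0) :=
  funext fun p => pdx_eq_fderiv hv p.1 p.2

theorem uncurry_pdy (hv : Differentiable ℝ (uncurry v)) :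
    uncurry (pdy v) = fun p => fderiv ℝ (uncurry v) p (0, 1) :=
  funext fun p => pdy_eq_fderiv hv p.1 p.2

theorem contDiff_pdx {n : WithTop ℕ∞} (hv : ContDiff ℝ (n + 1) (uncurry v)) :
    ContDiff ℝ n (uncurry (pdx v)) := by
  rw [uncurry_pdx (hv.differentiable (by simp))]
  exact (hv.fderiv_right le_rfl).clm_apply contDiff_const

theorem contDiff_pdy {n : WithTop ℕ∞} (hv : ContDiff ℝ (n + 1) (uncurry v)) :
    ContDiff ℝ n (uncurry (pdy v)) := by
  rw [uncurry_pdy (hv.differentiable (by simp))]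
  exact (hv.fderiv_right le_rfl).clm_apply contDiff_const

theorem differentiable_pdx (hv : ContDiff ℝ 2 (uncurry v)) :
    Differentiable ℝ (uncurry (pdx v)) :=
  (contDiff_pdx (n := 1) hv).differentiable one_ne_zero

theorem differentiable_pdy (hv : ContDiff ℝ 2 (uncurry v)) :
    Differentiable ℝ (uncurry (pdy v)) :=
  (contDiff_pdy (n := 1) hv).differentiable one_ne_zero

theorem pdx_pdy_comm (hv : ContDiff ℝ 2 (uncurry v)) (x y : ℝ) :
    pdx (pdy v) x y = pdy (pdx v) x y := by
  have hv' : Differentiable ℝ (uncurry v) := hv.differentiable two_ne_zero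
  have hDv : DifferentiableAt ℝ (fderiv ℝ (uncurry v)) (x, y) :=
    (hv.fderiv_right (m := 1) le_rfl).differentiable one_ne_zero _
  have hsymm := (hv.contDiffAt (x := (x, y))).isSymmSndFDerivAt (by simp) (1, 0) (0, 1)
  rw [pdx_eq_fderiv (differentiable_pdy hv), pdy_eq_fderiv (differentiable_pdx hv),
    uncurry_pdx hv', uncurry_pdy hv', fderiv_clm_apply hDv (differentiableAt_const _),
    fderiv_clm_apply hDv (differentiableAt_const _)]
  simpa using hsymm

theorem integral_pdx_add_pdy {P Q : ℝ → ℝ → ℝ} (hP : Differentiable ℝ (uncurry P))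
    (hQ : Differentiable ℝ (uncurry Q))
    (hdiv : Continuous fun p : ℝ × ℝ => pdx P p.1 p.2 + pdy Q p.1 p.2) (a b c d : ℝ) :
    ∫ x in a..b, ∫ y in c..d, (pdx P x y + pdy Q x y) =
      (∫ x in a..b, Q x d) - (∫ x in a..b, Q x c) + (∫ y in c..d, P b y) - ∫ y in c..d, P a y := by
  have hint : IntegrableOn (fun p : ℝ × ℝ => pdx P p.1 p.2 + pdy Q p.1 p.2)
      (Set.uIcc a b ×ˢ Set.uIcc c d) :=
    hdiv.continuousOn.integrableOn_compact (isCompact_uIcc.prod isCompact_uIcc)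
  simp only [pdx_eq_fderiv hP, pdy_eq_fderiv hQ] at hint ⊢
  exact integral2_divergence_prod_of_hasFDerivAt _ _ _ _ a c b d hP.continuous.continuousOn
    hQ.continuous.continuousOn (fun p _ => (hP p).hasFDerivAt) (fun p _ => (hQ p).hasFDerivAt) hint

theorem abs_pdx_le {M : ℝ} (hv : Differentiable ℝ (uncurry v))
    (hM : ∀ p, ‖fderiv ℝ (uncurry v) p‖ ≤ M) (x y : ℝ) : |pdx v x y| ≤ M := by
  rw [pdx_eq_fderiv hv, ← Real.norm_eq_abs]
  simpa using (fderiv ℝ (uncurry v) (x, y)).le_of_opNorm_le (hM (x, y)) (1, 0)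

theorem abs_pdy_le {M : ℝ} (hv : Differentiable ℝ (uncurry v))
    (hM : ∀ p, ‖fderiv ℝ (uncurry v) p‖ ≤ M) (x y : ℝ) : |pdy v x y| ≤ M := by
  rw [pdy_eq_fderiv hv, ← Real.norm_eq_abs]
  simpa using (fderiv ℝ (uncurry v) (x, y)).le_of_opNorm_le (hM (x, y)) (0, 1)

theorem lipschitzWith_pdy_fst {K : ℝ≥0} (hv : Differentiable ℝ (uncurry v))
    (hK : LipschitzWith K (fderiv ℝ (uncurry v))) (y : ℝ) :
    LipschitzWith K fun x => pdy v x y := by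
  refine LipschitzWith.of_dist_le_mul fun x x' => ?_
  have h : ‖fderiv ℝ (uncurry v) (x, y) - fderiv ℝ (uncurry v) (x', y)‖ ≤ K * dist x x' := by
    simpa [dist_eq_norm] using hK.dist_le_mul (x, y) (x', y)
  rw [pdy_eq_fderiv hv, pdy_eq_fderiv hv, dist_eq_norm, ← _root_.sub_apply]
  simpa using ContinuousLinearMap.le_of_opNorm_le _ h (0, 1)

theorem tendsto_pdx_zero {K : ℝ≥0} {l : Filter ℝ} {m : ℝ} (hv : Differentiable ℝ (uncurry v))
    (hK : LipschitzWith K (fderiv ℝ (uncurry v))) (hl : ∀ x, Tendsto (v x) l (𝓝 m)) (x : ℝ) :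
    Tendsto (pdx v x) l (𝓝 0) := by
  refine (tendsto_fderiv_apply_zero (p := fun y => (x, y)) (v := (1, 0)) hv hK
    fun δ => ?_).congr fun y => (pdx_eq_fderiv hv x y).symm
  simpa using (hl (x + δ)).sub (hl x)

theorem tendsto_pdy_zero {K : ℝ≥0} {l : Filter ℝ} {m x : ℝ} (hv : Differentiable ℝ (uncurry v))
    (hK : LipschitzWith K (fderiv ℝ (uncurry v))) (hshift : ∀ δ, Tendsto (· + δ) l l)
    (hl : Tendsto (v x) l (𝓝 m)) : Tendsto (pdy v x) l (𝓝 0) := by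
  refine (tendsto_fderiv_apply_zero (p := fun y => (x, y)) (v := (0, 1)) hv hK
    fun δ => ?_).congr fun y => (pdy_eq_fderiv hv x y).symm
  simpa using (hl.comp (hshift δ)).sub hl

end PartialDerivatives

section Integrals

theorem integrable_of_hasDerivAt_of_nonneg_of_tendsto {f f' : ℝ → ℝ} {m n : ℝ}
    (hf : ∀ t, HasDerivAt f (f' t) t) (hcont : Continuous f') (hnonneg : ∀ t, 0 ≤ f' t)
    (hbot : Tendsto f atBot (𝓝 m)) (htop : Tendsto f atTop (𝓝 n)) : Integrable f' := by
  refine integrable_of_intervalIntegral_norm_tendsto (n - m) (fun R : ℝ => hcont.integrableOn_Ioc)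
    tendsto_neg_atTop_atBot tendsto_id
    ((htop.sub (hbot.comp tendsto_neg_atTop_atBot)).congr fun R => ?_)
  simp only [Real.norm_of_nonneg (hnonneg _)]
  exact (intervalIntegral.integral_eq_sub_of_hasDerivAt (fun t _ => hf t)
    (hcont.intervalIntegrable _ _)).symm

theorem norm_intervalIntegral_le_integral_norm {G : Type*} [NormedAddCommGroup G]
    [NormedSpace ℝ G] {f : ℝ → G} (hf : Integrable f) (a b : ℝ) : ‖∫ y in a..b, f y‖ ≤ ∫ y, ‖f y‖ :=
  intervalIntegral.norm_integral_le_integral_norm_uIoc.trans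
    (setIntegral_le_integral hf.norm (ae_of_all _ fun y => norm_nonneg (f y)))

theorem tendsto_intervalIntegral_of_norm_le_const {ι G : Type*} [NormedAddCommGroup G]
    [NormedSpace ℝ G] {l : Filter ι} [l.IsCountablyGenerated] {f : ι → ℝ → G} {g : ℝ → G} {C : ℝ}
    (hf : ∀ i, Continuous (f i)) (hC : ∀ i x, ‖f i x‖ ≤ C)
    (hlim : ∀ x, Tendsto (fun i => f i x) l (𝓝 (g x))) (a b : ℝ) :
    Tendsto (fun i => ∫ x in a..b, f i x) l (𝓝 (∫ x in a..b, g x)) :=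
  intervalIntegral.tendsto_integral_filter_of_dominated_convergence (fun _ => C)
    (.of_forall fun i => (hf i).aestronglyMeasurable)
    (.of_forall fun i => ae_of_all _ fun x _ => hC i x) intervalIntegrable_const
    (ae_of_all _ fun x _ => hlim x)

theorem lipschitzWith_integral_sq {X Y : Type*} [PseudoMetricSpace X] [MeasurableSpace Y]
    {μ : Measure Y} {w : X → Y → ℝ} {K I : ℝ≥0} (hw : ∀ x, Integrable (w x) μ)
    (hsq : ∀ x, Integrable (fun y => (w x y) ^ 2) μ) (hI : ∀ x, ∫ y, |w x y| ∂μ ≤ I)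
    (hK : ∀ y, LipschitzWith K fun x => w x y) :
    LipschitzWith (2 * K * I) fun x => ∫ y, (w x y) ^ 2 ∂μ := by
  refine LipschitzWith.of_dist_le_mul fun x x' => ?_
  have hpoint : ∀ y, ‖(w x y) ^ 2 - (w x' y) ^ 2‖ ≤ K * dist x x' * (|w x y| + |w x' y|) := by
    intro y
    have h := (hK y).dist_le_mul x x'
    rw [Real.dist_eq] at h
    calc ‖(w x y) ^ 2 - (w x' y) ^ 2‖ = |w x y - w x' y| * |w x y + w x' y| := by
          rw [Real.norm_eq_abs, ← abs_mul]; ring_nf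
      _ ≤ K * dist x x' * (|w x y| + |w x' y|) := by
          gcongr
          exact abs_add_le _ _
  rw [dist_eq_norm, ← integral_sub (hsq x) (hsq x')]
  calc ‖∫ y, ((w x y) ^ 2 - (w x' y) ^ 2) ∂μ‖
      ≤ ∫ y, K * dist x x' * (|w x y| + |w x' y|) ∂μ :=
        norm_integral_le_of_norm_le (((hw x).abs.add (hw x').abs).const_mul _)
          (ae_of_all _ hpoint)
    _ = K * dist x x' * ((∫ y, |w x y| ∂μ) + ∫ y, |w x' y| ∂μ) := by
        rw [integral_const_mul, integral_add (hw x).abs (hw x').abs]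
    _ ≤ K * dist x x' * (I + I) := by
        gcongr
        exacts [hI x, hI x']
    _ = (2 * K * I : ℝ≥0) * dist x x' := by push_cast; ring

end Integrals

section Stress

/-- The `yy` entry of the stress tensor `∇u ⊗ ∇u - (|∇u|² / 2 + F(u)) I` of the Allen-Cahn energy.
Together with the `xy` entry `uₓuᵧ` it forms the momentum current in the `y` direction. -/
noncomputable def stressYY (F : ℝ → ℝ) (u : ℝ → ℝ → ℝ) (x y : ℝ) : ℝ :=
  ((pdy u x y) ^ 2 - (pdx u x y) ^ 2) / 2 - F (u x y)

variable {F : ℝ → ℝ} {u : ℝ → ℝ → ℝ} {c : ℝ}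

theorem differentiable_stressYY (hF : Differentiable ℝ F) (hu : ContDiff ℝ 2 (uncurry u)) :
    Differentiable ℝ (uncurry (stressYY F u)) := by
  simp only [div_eq_mul_inv, stressYY, uncurry_def]
  exact ((((differentiable_pdy hu).fun_pow 2).fun_sub
    ((differentiable_pdx hu).fun_pow 2)).mul_const _).fun_sub
      (hF.comp (hu.differentiable two_ne_zero))

theorem pdx_add_pdy_stress (hF : Differentiable ℝ F) (hu : ContDiff ℝ 2 (uncurry u)) {x y : ℝ}
    (hpde : pdxx u x y + pdyy u x y + c * pdy u x y = deriv F (u x y)) :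
    pdx (fun x y => pdx u x y * pdy u x y) x y + pdy (stressYY F u) x y =
      -c * (pdy u x y) ^ 2 := by
  have hux := differentiable_pdx hu
  have huy := differentiable_pdy hu
  have hxy : pdx (fun x y => pdx u x y * pdy u x y) x y =
      pdxx u x y * pdy u x y + pdx u x y * pdy (pdx u) x y := by
    rw [← pdx_pdy_comm hu]
    exact ((hasDerivAt_pdx hux x y).mul (hasDerivAt_pdx huy x y)).deriv
  have hFu : HasDerivAt (fun t => F (u x t)) (deriv F (u x y) * pdy u x y) y :=
    (hF (u x y)).hasDerivAt.comp y (hasDerivAt_pdy (hu.differentiable two_ne_zero) x y)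
  have hyy : pdy (stressYY F u) x y =
      pdy u x y * pdyy u x y - pdx u x y * pdy (pdx u) x y - deriv F (u x y) * pdy u x y := by
    refine ((((hasDerivAt_pdy huy x y).pow 2).sub
      ((hasDerivAt_pdy hux x y).pow 2)).div_const 2 |>.sub hFu).deriv.trans ?_
    simp only [pdyy, pdy]
    ring
  rw [hxy, hyy, ← hpde]
  ring

theorem integral_pdy_sq_rectangle (hF : Differentiable ℝ F) (hu : ContDiff ℝ 2 (uncurry u))
    (hpde : ∀ x y, pdxx u x y + pdyy u x y + c * pdy u x y = deriv F (u x y)) (a b R : ℝ) :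
    c * ∫ x in a..b, ∫ y in -R..R, (pdy u x y) ^ 2 =
      (∫ y in -R..R, pdx u a y * pdy u a y) - (∫ y in -R..R, pdx u b y * pdy u b y) +
        ((∫ x in a..b, stressYY F u x (-R)) - ∫ x in a..b, stressYY F u x R) := by
  have hP : Differentiable ℝ (uncurry fun x y => pdx u x y * pdy u x y) :=
    (differentiable_pdx hu).mul (differentiable_pdy hu)
  have hcont : Continuous fun p : ℝ × ℝ => -c * (pdy u p.1 p.2) ^ 2 :=
    continuous_const.mul ((differentiable_pdy hu).continuous.pow 2)
  have hdiv := integral_pdx_add_pdy hP (differentiable_stressYY hF hu)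
    (by simpa only [pdx_add_pdy_stress hF hu (hpde _ _)] using hcont) a b (-R) R
  simp only [pdx_add_pdy_stress hF hu (hpde _ _), intervalIntegral.integral_const_mul] at hdiv
  linarith

theorem abs_stressYY_le {C M x y : ℝ} (hu : Differentiable ℝ (uncurry u))
    (hM : ∀ p, ‖fderiv ℝ (uncurry u) p‖ ≤ M) (hC : |F (u x y)| ≤ C) :
    |stressYY F u x y| ≤ M ^ 2 / 2 + C := by
  have hx : (pdx u x y) ^ 2 ≤ M ^ 2 := sq_le_sq.2 ((abs_pdx_le hu hM x y).trans (le_abs_self M))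
  have hy : (pdy u x y) ^ 2 ≤ M ^ 2 := sq_le_sq.2 ((abs_pdy_le hu hM x y).trans (le_abs_self M))
  obtain ⟨hlo, hhi⟩ := abs_le.1 hC
  rw [stressYY, abs_le]
  constructor <;> linarith [sq_nonneg (pdx u x y), sq_nonneg (pdy u x y)]

theorem tendsto_stressYY {K : ℝ≥0} {l : Filter ℝ} {m : ℝ} (hF : ContinuousAt F m)
    (hu : Differentiable ℝ (uncurry u)) (hK : LipschitzWith K (fderiv ℝ (uncurry u)))
    (hshift : ∀ δ, Tendsto (· + δ) l l) (hl : ∀ x, Tendsto (u x) l (𝓝 m)) (x : ℝ) :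
    Tendsto (stressYY F u x) l (𝓝 (-F m)) := by
  have h := ((((tendsto_pdy_zero hu hK hshift (hl x)).pow 2).sub
    ((tendsto_pdx_zero hu hK hl x).pow 2)).div_const 2).sub (hF.tendsto.comp (hl x))
  rwa [sub_self, zero_div, zero_sub] at h

end Stress

/-- The flux function `h(x) = ∫ uₓ uᵧ dy`: the flux of `y`-momentum through the vertical line
through `x`. -/
noncomputable def flux (u : ℝ → ℝ → ℝ) (x : ℝ) : ℝ := ∫ y, pdx u x y * pdy u x y

/-- A `C²` function of the plane, nondecreasing in `y`, which joins `α` at `y = -∞` to `β` at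
`y = +∞` along every vertical line. -/
structure IsMonotoneFront (u : ℝ → ℝ → ℝ) (α β : ℝ) : Prop where
  contDiff : ContDiff ℝ 2 (uncurry u)
  pdy_nonneg : ∀ x y, 0 ≤ pdy u x y
  tendsto_atBot : ∀ x, Tendsto (u x) atBot (𝓝 α)
  tendsto_atTop : ∀ x, Tendsto (u x) atTop (𝓝 β)

theorem IsTravelingWave.isMonotoneFront {F : ℝ → ℝ} {c : ℝ} {u : ℝ → ℝ → ℝ}
    (hu : IsTravelingWave F c u) : IsMonotoneFront u (-1) 1 := by
  obtain ⟨⟨hsmooth, -, -, hpos⟩, htop, hbot⟩ := hu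
  exact ⟨hsmooth.of_le (by norm_num), fun x y => (hpos x y).le, hbot, htop⟩

namespace IsMonotoneFront

variable {u : ℝ → ℝ → ℝ} {α β : ℝ}

theorem differentiable (hu : IsMonotoneFront u α β) : Differentiable ℝ (uncurry u) :=
  hu.contDiff.differentiable two_ne_zero

theorem continuous_pdx (hu : IsMonotoneFront u α β) : Continuous (uncurry (pdx u)) :=
  (differentiable_pdx hu.contDiff).continuous

theorem continuous_pdy (hu : IsMonotoneFront u α β) : Continuous (uncurry (pdy u)) :=
  (differentiable_pdy hu.contDiff).continuous

theorem mem_Icc (hu : IsMonotoneFront u α β) (x y : ℝ) : u x y ∈ Set.Icc α β := by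
  have hmono : Monotone (u x) :=
    monotone_of_hasDerivAt_nonneg (hasDerivAt_pdy hu.differentiable x) (hu.pdy_nonneg x)
  exact ⟨hmono.le_of_tendsto (hu.tendsto_atBot x) y, hmono.ge_of_tendsto (hu.tendsto_atTop x) y⟩

theorem integrable_pdy (hu : IsMonotoneFront u α β) (x : ℝ) : Integrable (pdy u x) :=
  integrable_of_hasDerivAt_of_nonneg_of_tendsto (hasDerivAt_pdy hu.differentiable x)
    (hu.continuous_pdy.uncurry_left x) (hu.pdy_nonneg x) (hu.tendsto_atBot x) (hu.tendsto_atTop x)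

theorem integral_pdy (hu : IsMonotoneFront u α β) (x : ℝ) : ∫ y, pdy u x y = β - α :=
  integral_of_hasDerivAt_of_tendsto (hasDerivAt_pdy hu.differentiable x) (hu.integrable_pdy x)
    (hu.tendsto_atBot x) (hu.tendsto_atTop x)

theorem integrable_mul_pdy (hu : IsMonotoneFront u α β) {v : ℝ → ℝ} {M : ℝ} (hv : Continuous v)
    (hM : ∀ y, |v y| ≤ M) (x : ℝ) : Integrable fun y => v y * pdy u x y :=
  (hu.integrable_pdy x).bdd_mul hv.aestronglyMeasurable (ae_of_all _ hM)

theorem integral_norm_mul_pdy_le (hu : IsMonotoneFront u α β) {v : ℝ → ℝ} {M : ℝ}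
    (hM : ∀ y, |v y| ≤ M) (x : ℝ) : ∫ y, ‖v y * pdy u x y‖ ≤ M * (β - α) := by
  calc ∫ y, ‖v y * pdy u x y‖ ≤ ∫ y, M * pdy u x y := by
        refine integral_mono_of_nonneg (ae_of_all _ fun y => norm_nonneg _)
          ((hu.integrable_pdy x).const_mul M) (ae_of_all _ fun y => ?_)
        dsimp only
        rw [norm_mul, Real.norm_of_nonneg (hu.pdy_nonneg x y)]
        exact mul_le_mul_of_nonneg_right (hM y) (hu.pdy_nonneg x y)
    _ = M * (β - α) := by rw [integral_const_mul, hu.integral_pdy]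

section BoundedGradient

variable {M : ℝ} (hu : IsMonotoneFront u α β) (hM : ∀ p, ‖fderiv ℝ (uncurry u) p‖ ≤ M)
include hu hM

theorem integrable_pdx_mul_pdy (x : ℝ) : Integrable fun y => pdx u x y * pdy u x y :=
  hu.integrable_mul_pdy (hu.continuous_pdx.uncurry_left x) (abs_pdx_le hu.differentiable hM x) x

theorem integrable_pdy_sq (x : ℝ) : Integrable fun y => (pdy u x y) ^ 2 := by
  simp only [pow_two]
  exact hu.integrable_mul_pdy (hu.continuous_pdy.uncurry_left x)
    (abs_pdy_le hu.differentiable hM x) x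

theorem abs_flux_le (x : ℝ) : |flux u x| ≤ M * (β - α) :=
  (norm_integral_le_integral_norm _).trans
    (hu.integral_norm_mul_pdy_le (abs_pdx_le hu.differentiable hM x) x)

theorem lipschitzWith_integral_pdy_sq {K : ℝ≥0} (hK : LipschitzWith K (fderiv ℝ (uncurry u))) :
    LipschitzWith (2 * K * (β - α).toNNReal) fun x => ∫ y, (pdy u x y) ^ 2 := by
  refine lipschitzWith_integral_sq hu.integrable_pdy (hu.integrable_pdy_sq hM) (fun x => ?_)
    (lipschitzWith_pdy_fst hu.differentiable hK)
  simp only [abs_of_nonneg (hu.pdy_nonneg x _), hu.integral_pdy]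
  exact Real.le_coe_toNNReal _

theorem tendsto_integral_truncated_pdy_sq (a b : ℝ) :
    Tendsto (fun R : ℝ => ∫ x in a..b, ∫ y in -R..R, (pdy u x y) ^ 2) atTop
      (𝓝 (∫ x in a..b, ∫ y, (pdy u x y) ^ 2)) := by
  refine tendsto_intervalIntegral_of_norm_le_const (C := M * (β - α)) (fun R => ?_)
    (fun R x => ?_) (fun x => ?_) a b
  · exact intervalIntegral.continuous_parametric_intervalIntegral_of_continuous'
      (f := fun x y => (pdy u x y) ^ 2) (Continuous.fun_pow hu.continuous_pdy 2) _ _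
  · refine (norm_intervalIntegral_le_integral_norm (hu.integrable_pdy_sq hM x) _ _).trans ?_
    simp only [pow_two]
    exact hu.integral_norm_mul_pdy_le (abs_pdy_le hu.differentiable hM x) x
  · exact intervalIntegral_tendsto_integral (hu.integrable_pdy_sq hM x) tendsto_neg_atTop_atBot
      tendsto_id

variable {F : ℝ → ℝ} {K : ℝ≥0} (hF : Differentiable ℝ F)
  (hK : LipschitzWith K (fderiv ℝ (uncurry u)))
include hF hK

theorem tendsto_integral_stressYY {l : Filter ℝ} [l.IsCountablyGenerated] {m : ℝ}
    (hshift : ∀ δ, Tendsto (· + δ) l l) (hl : ∀ x, Tendsto (u x) l (𝓝 m)) (a b : ℝ) :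
    Tendsto (fun y => ∫ x in a..b, stressYY F u x y) l (𝓝 ((b - a) * -F m)) := by
  obtain ⟨C, hC⟩ : ∃ C, ∀ s ∈ Set.Icc α β, |F s| ≤ C :=
    isCompact_Icc.exists_bound_of_continuousOn hF.continuous.continuousOn
  rw [← smul_eq_mul, ← intervalIntegral.integral_const]
  exact tendsto_intervalIntegral_of_norm_le_const
    (fun y => (differentiable_stressYY hF hu.contDiff).continuous.uncurry_right y)
    (fun y x => abs_stressYY_le hu.differentiable hM (hC _ (hu.mem_Icc x y)))
    (tendsto_stressYY hF.continuous.continuousAt hu.differentiable hK hshift hl) a b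

variable {c : ℝ} (hpde : ∀ x y, pdxx u x y + pdyy u x y + c * pdy u x y = deriv F (u x y))
include hpde

theorem mul_integral_integral_pdy_sq (a b : ℝ) :
    c * ∫ x in a..b, ∫ y, (pdy u x y) ^ 2 = flux u a - flux u b + (F β - F α) * (b - a) := by
  have hflux : ∀ x, Tendsto (fun R : ℝ => ∫ y in -R..R, pdx u x y * pdy u x y) atTop
      (𝓝 (flux u x)) := fun x =>
    intervalIntegral_tendsto_integral (hu.integrable_pdx_mul_pdy hM x) tendsto_neg_atTop_atBot
      tendsto_id
  have htop := hu.tendsto_integral_stressYY hM hF hK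
    (fun δ => tendsto_atTop_add_const_right _ δ tendsto_id) hu.tendsto_atTop a b
  have hbot := (hu.tendsto_integral_stressYY hM hF hK
    (fun δ => tendsto_atBot_add_const_right _ δ tendsto_id) hu.tendsto_atBot a b).comp
      tendsto_neg_atTop_atBot
  have hlhs := (hu.tendsto_integral_truncated_pdy_sq hM a b).const_mul c
  have hrhs := ((hflux a).sub (hflux b)).add (hbot.sub htop)
  rw [tendsto_nhds_unique hlhs
    (hrhs.congr fun R => (integral_pdy_sq_rectangle hF hu.contDiff hpde a b R).symm)]
  ring

theorem hasDerivAt_flux (x : ℝ) :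
    HasDerivAt (flux u) (F β - F α - c * ∫ y, (pdy u x y) ^ 2) x := by
  have hcont : Continuous fun x => ∫ y, (pdy u x y) ^ 2 :=
    (hu.lipschitzWith_integral_pdy_sq hM hK).continuous
  have hflux : flux u = fun t =>
      flux u 0 + (F β - F α) * t - c * ∫ s in (0)..t, ∫ y, (pdy u s y) ^ 2 := by
    funext t
    rw [hu.mul_integral_integral_pdy_sq hM hF hK hpde]
    ring
  have hderiv := (((hasDerivAt_id x).const_mul (F β - F α)).const_add (flux u 0)).fun_sub
    ((hcont.integral_hasStrictDerivAt 0 x).hasDerivAt.const_mul c)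
  rw [hflux]
  simpa using hderiv

end BoundedGradient

end IsMonotoneFront

theorem unbalanced_flux_function_identity_general {F : ℝ → ℝ} (hF : Differentiable ℝ F)
    {c α β : ℝ} {u : ℝ → ℝ → ℝ} (hu : IsMonotoneFront u α β)
    (hpde : ∀ x y, pdxx u x y + pdyy u x y + c * pdy u x y = deriv F (u x y))
    (hbd₁ : ∃ M : ℝ, ∀ p, ‖iteratedFDeriv ℝ 1 (uncurry u) p‖ ≤ M)
    (hbd₂ : ∃ K : ℝ, ∀ p, ‖iteratedFDeriv ℝ 2 (uncurry u) p‖ ≤ K) :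
    (∀ x, Integrable fun y => pdx u x y * pdy u x y) ∧
    (∃ C, ∀ x, |flux u x| ≤ C) ∧
    (∀ x, HasDerivAt (flux u) (F β - F α - c * ∫ y, (pdy u x y) ^ 2) x) ∧
    (∀ a b, c * ∫ x in a..b, ∫ y, (pdy u x y) ^ 2 =
      flux u a - flux u b + (F β - F α) * (b - a)) := by
  obtain ⟨M, hM⟩ := hbd₁
  obtain ⟨K, hK⟩ := hbd₂
  simp only [norm_iteratedFDeriv_one] at hM
  have hlip : LipschitzWith K.toNNReal (fderiv ℝ (uncurry u)) :=
    lipschitzWith_fderiv_of_norm_iteratedFDeriv_two_le hu.contDiff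
      fun p => (hK p).trans (Real.le_coe_toNNReal K)
  exact ⟨hu.integrable_pdx_mul_pdy hM, ⟨M * (β - α), hu.abs_flux_le hM⟩,
    hu.hasDerivAt_flux hM hF hlip hpde, hu.mul_integral_integral_pdy_sq hM hF hlip hpde⟩

/-- The flux function `h(x) = ∫ uₓ uᵧ dy` for the unbalanced equation is well
defined, bounded, differentiable with `h'(x) = F(1) - c ∫ uᵧ² dy`, and the
resulting integral identity holds (computation in the proof of Lemma 3.1). -/
theorem unbalanced_flux_function_identity
    (F : ℝ → ℝ) (hF : UnbalancedDoubleWell F) (c : ℝ) (hc : 0 < c)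
    (u : ℝ → ℝ → ℝ) (hu : IsTravelingWave F c u)
    (hbd : ∀ i : ℕ, i ≤ 3 → ∃ M : ℝ,
      ∀ p : ℝ × ℝ, ‖iteratedFDeriv ℝ i (fun q : ℝ × ℝ => u q.1 q.2) p‖ ≤ M) :
    (∀ x : ℝ, Integrable (fun y => pdx u x y * pdy u x y)) ∧
    (∃ C : ℝ, ∀ x : ℝ, |∫ y, pdx u x y * pdy u x y| ≤ C) ∧
    (∀ x : ℝ, HasDerivAt (fun x' => ∫ y, pdx u x' y * pdy u x' y)
      (F 1 - c * ∫ y, (pdy u x y) ^ 2) x) ∧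
    (∀ a b : ℝ, a < b →
      ∫ x in a..b, ∫ y, (pdy u x y) ^ 2 =
        ((∫ y, pdx u a y * pdy u a y) - ∫ y, pdx u b y * pdy u b y) / c +
          F 1 * (b - a) / c) := by
  obtain ⟨hint, hbound, hderiv, hidentity⟩ := unbalanced_flux_function_identity_general
    (hF.1.differentiable three_ne_zero) hu.isMonotoneFront hu.1.2.1 (hbd 1 (by norm_num))
    (hbd 2 (by norm_num))
  obtain ⟨-, -, -, -, -, -, -, hFm, -⟩ := hF
  simp only [hFm, sub_zero] at hderiv hidentity
  refine ⟨hint, hbound, hderiv, fun a b _ => ?_⟩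
  rw [← add_div, eq_div_iff hc.ne', mul_comm]
  exact hidentity a b
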